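/- For every closed term M of Λ⊕, the call-by-value big-step and small-step semantics coincide: ⟪M⟫v = ⟦M⟧v, where ⟪M⟫v is the pointwise infimum of all distributions 𝒟 with M ⇓v 𝒟 and ⟦M⟧v is the pointwise supremum of all distributions 𝒟 with M ⇒v 𝒟. -/

import Mathlib

open scoped ENNReal

/-- Terms of Λ⊕ (and of Λ⊕⁺), in de Bruijn notation: variables, abstractions,
applications and binary (probabilistic) sums.  De Bruijn indices realize
"terms up to renaming of bound variables". -/
inductive Term : Type
  | var : ℕ → Term
  | lam : Term → Term
  | app : Term → Term → Term
  | choice : Term → Term → Term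
  deriving DecidableEq

namespace Term

/-- Values: variables and abstractions. -/
inductive IsValue : Term → Prop
  | var (n : ℕ) : IsValue (var n)
  | lam (M : Term) : IsValue (lam M)

/-- Boolean value test. -/
def isVal : Term → Bool
  | var _ => true
  | lam _ => true
  | _ => false

/-- Shifting of de Bruijn indices: add `d` to all indices `≥ c`. -/
def shift (d c : ℕ) : Term → Term
  | var n => if n < c then var n else var (n + d)
  | lam M => lam (shift d (c + 1) M)
  | app M N => app (shift d c M) (shift d c N)
  | choice M N => choice (shift d c M) (shift d c N)

/-- Capture-avoiding substitution `M[j := N]` (the variable `j` is consumed and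
higher indices are decremented, as in a β-step). -/
def subst : Term → ℕ → Term → Term
  | var n, j, N => if n = j then shift j 0 N else if j < n then var (n - 1) else var n
  | lam M, j, N => lam (subst M (j + 1) N)
  | app M L, j, N => app (subst M j N) (subst L j N)
  | choice M L, j, N => choice (subst M j N) (subst L j N)

/-- All free indices are `< n`. -/
def closedUnder : Term → ℕ → Prop
  | var m, n => m < n
  | lam M, n => closedUnder M (n + 1)
  | app M N, n => closedUnder M n ∧ closedUnder N n
  | choice M N, n => closedUnder M n ∧ closedUnder N n

/-- Closed terms: no free variables. -/
def Closed (M : Term) : Prop := closedUnder M 0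

end Term

/-- (Sub)distributions are represented as functions from terms into `ℝ≥0∞`;
genuine distributions (`IsDist`) are supported on values and have mass `≤ 1`. -/
abbrev PDist := Term → ℝ≥0∞

/-- The sum (total mass) `Σ𝒟` of a distribution. -/
noncomputable def dsum (D : PDist) : ℝ≥0∞ := ∑' M, D M

/-- The support of a distribution. -/
def dsupp (D : PDist) : Set Term := {M | D M ≠ 0}

/-- The everywhere-zero distribution `∅`. -/
noncomputable def dzero : PDist := fun _ => 0

/-- The Dirac distribution `{V^1}`. -/
noncomputable def dirac (V : Term) : PDist := fun M => if M = V then 1 else 0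

/-- Being a genuine (sub)probability distribution: supported on values, with
total mass at most one. -/
def IsDist (D : PDist) : Prop := (∀ M, D M ≠ 0 → M.IsValue) ∧ dsum D ≤ 1

/-- Call-by-value reduction `↦v`, relating a term to the (equiprobable) finite
sequence of its possible reducts. -/
inductive RedV : Term → List Term → Prop
  | beta {M V : Term} : V.IsValue → RedV (.app (.lam M) V) [M.subst 0 V]
  | choice {V W : Term} : V.IsValue → W.IsValue → RedV (.choice V W) [V, W]
  | appL {M N : Term} {Ls : List Term} :
      RedV M Ls → RedV (.app M N) (Ls.map (fun L => .app L N))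
  | appR {V M : Term} {Ns : List Term} :
      V.IsValue → RedV M Ns → RedV (.app V M) (Ns.map (fun L => .app V L))
  | choiceL {M N : Term} {Ls : List Term} :
      RedV M Ls → RedV (.choice M N) (Ls.map (fun L => .choice L N))
  | choiceR {V M : Term} {Ns : List Term} :
      V.IsValue → RedV M Ns → RedV (.choice V M) (Ns.map (fun L => .choice V L))

/-- Call-by-name reduction `↦n`. -/
inductive RedN : Term → List Term → Prop
  | beta {M N : Term} : RedN (.app (.lam M) N) [M.subst 0 N]
  | choice {M N : Term} : RedN (.choice M N) [M, N]
  | appL {M N : Term} {Ls : List Term} :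
      RedN M Ls → RedN (.app M N) (Ls.map (fun L => .app L N))

/-- The inductive small-step convergence relation `⇒`, parametric in the
underlying reduction relation: any term evaluates to `∅`; a value `V`
evaluates to `{V^1}`; and if `M ↦ N₁,…,Nₙ` and `Nᵢ ⇒ 𝒟ᵢ` then
`M ⇒ Σᵢ (1/n)𝒟ᵢ`. -/
inductive Conv (Red : Term → List Term → Prop) : Term → PDist → Prop
  | bot (M : Term) : Conv Red M dzero
  | val {V : Term} : V.IsValue → Conv Red V (dirac V)
  | step {M : Term} {Ns : List Term} (Ds : Fin Ns.length → PDist) :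
      Red M Ns → (∀ i, Conv Red (Ns.get i) (Ds i)) →
      Conv Red M (fun W => (∑ i, Ds i W) / (Ns.length : ℝ≥0∞))

/-- Call-by-value small-step convergence `⇒v`. -/
def SmallV : Term → PDist → Prop := Conv RedV

/-- Call-by-name small-step convergence `⇒n`. -/
def SmallN : Term → PDist → Prop := Conv RedN

/-- The small-step semantics `⟦M⟧`: the pointwise supremum of all distributions
derivable for `M`. -/
noncomputable def semOf (S : Term → PDist → Prop) (M : Term) : PDist :=
  fun W => ⨆ (D : PDist) (_ : S M D), D W

/-- Call-by-value small-step semantics `⟦M⟧v`. -/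
noncomputable def semV : Term → PDist := semOf SmallV

/-- Call-by-name small-step semantics `⟦M⟧n`. -/
noncomputable def semN : Term → PDist := semOf SmallN

/-- One-step unfolding of the divergence inference system: a value diverges
with probability `0`; if `M ↦ N₁,…,Nₙ` and `Nᵢ` diverges with probability
`pᵢ`, then `M` diverges with probability `Σᵢ (1/n)pᵢ`. -/
def DivStep (Red : Term → List Term → Prop) (R : Term → ℝ≥0∞ → Prop)
    (M : Term) (p : ℝ≥0∞) : Prop :=
  (M.IsValue ∧ p = 0) ∨
    ∃ (Ns : List Term) (ps : Fin Ns.length → ℝ≥0∞),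
      Red M Ns ∧ (∀ i, R (Ns.get i) (ps i)) ∧ p = (∑ i, ps i) / (Ns.length : ℝ≥0∞)

/-- The coinductively-defined divergence relation `⇓div`: the union of all
consistent relations between terms and probabilities in `[0,1]`. -/
def Diverges (Red : Term → List Term → Prop) (M : Term) (p : ℝ≥0∞) : Prop :=
  ∃ R : Term → ℝ≥0∞ → Prop,
    (∀ N q, R N q → q ≤ 1 ∧ DivStep Red R N q) ∧ R M p

/-- Call-by-value divergence `⇓div`. -/
def DivV : Term → ℝ≥0∞ → Prop := Diverges RedV

/-- Call-by-name divergence `⇓div,n`. -/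
def DivN : Term → ℝ≥0∞ → Prop := Diverges RedN

/-- One-step unfolding of the call-by-value big-step inference system. -/
def BigVStep (R : Term → PDist → Prop) (M : Term) (D : PDist) : Prop :=
  (M.IsValue ∧ D = dirac M) ∨
  (∃ (N L : Term) (E F : PDist) (G : Term → Term → PDist),
      M = .app N L ∧ R N E ∧ R L F ∧
      (∀ P V, E (.lam P) ≠ 0 → V.IsValue → F V ≠ 0 → R (P.subst 0 V) (G P V)) ∧
      D = fun W => ∑' (P : Term), ∑' (V : Term), E (.lam P) * F V * G P V W) ∨
  (∃ (N L : Term) (E F : PDist),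
      M = .choice N L ∧ R N E ∧ R L F ∧
      D = fun W => (E W * dsum F + F W * dsum E) / 2)

/-- The coinductive call-by-value big-step relation `⇓v`: the union of all
consistent relations between terms and distributions. -/
def BigV (M : Term) (D : PDist) : Prop :=
  ∃ R : Term → PDist → Prop,
    (∀ N E, R N E → IsDist E ∧ BigVStep R N E) ∧ R M D

/-- One-step unfolding of the call-by-name big-step inference system. -/
def BigNStep (R : Term → PDist → Prop) (M : Term) (D : PDist) : Prop :=
  (M.IsValue ∧ D = dirac M) ∨
  (∃ (N L : Term) (E : PDist) (F : Term → PDist),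
      M = .app N L ∧ R N E ∧
      (∀ P, E (.lam P) ≠ 0 → R (P.subst 0 L) (F P)) ∧
      D = fun W => ∑' (P : Term), E (.lam P) * F P W) ∨
  (∃ (N L : Term) (E F : PDist),
      M = .choice N L ∧ R N E ∧ R L F ∧ D = fun W => (E W + F W) / 2)

/-- The coinductive call-by-name big-step relation `⇓n`. -/
def BigN (M : Term) (D : PDist) : Prop :=
  ∃ R : Term → PDist → Prop,
    (∀ N E, R N E → IsDist E ∧ BigNStep R N E) ∧ R M D

/-- Big-step semantics `⟪M⟫`: the pointwise infimum of all distributions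
derivable for `M` in a big-step system. -/
noncomputable def bigSemOf (B : Term → PDist → Prop) (M : Term) : PDist :=
  fun W => ⨅ (D : PDist) (_ : B M D), D W

/-! The big-step rules define a monotone operator on families of distributions indexed by terms.
Every fixed point of this operator averages over the reducts of a term, hence lies above all
finite small-step approximations. Conversely the small-step semantics is a prefixed point: below
an evaluation context `C`, a derivation for `M` and derivations for the terms `C V` can be
concatenated, and suprema commute with the countable sums involved because derivations for a fixed
term are directed. So the small-step semantics is the least fixed point. As a fixed point
consisting of subdistributions it is a coinductive big-step derivation, and the pointwise infimum
of the big-step derivations is a prefixed point, hence lies above the least one. -/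

/-! ### Sums and suprema -/

theorem tsum_iSup_of_directed {α ι : Type*} {f : ι → α → ℝ≥0∞} (hf : Directed (· ≤ ·) f) :
    ∑' a, ⨆ i, f i a = ⨆ i, ∑' a, f i a := by
  simp only [ENNReal.tsum_eq_iSup_sum]
  rw [iSup_comm]
  refine iSup_congr fun s => ENNReal.finsetSum_iSup fun i j => ?_
  obtain ⟨k, hi, hj⟩ := hf i j
  exact ⟨k, fun a => ⟨hi a, hj a⟩⟩

theorem tsum_iSup_eq_iSup_pi {α : Type*} {κ : α → Type*} [∀ a, Nonempty (κ a)]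
    (f : ∀ a, κ a → ℝ≥0∞) : ∑' a, ⨆ k, f a k = ⨆ k : ∀ a, κ a, ∑' a, f a (k a) := by
  classical
  have directed : Directed (· ≤ ·) fun (k : ∀ a, κ a) a => f a (k a) := fun k l =>
    ⟨fun a => if f a (k a) ≤ f a (l a) then l a else k a,
      fun a => by dsimp only; split_ifs with h; exacts [h, le_rfl],
      fun a => by dsimp only; split_ifs with h; exacts [le_rfl, (not_le.mp h).le]⟩
  rw [← tsum_iSup_of_directed directed]
  exact tsum_congr fun a => ((Function.surjective_eval a).iSup_comp (f a)).symm

/-! ### Distributions -/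

theorem dirac_self (V : Term) : dirac V V = 1 := if_pos rfl

theorem dirac_of_ne {V W : Term} (h : W ≠ V) : dirac V W = 0 := if_neg h

theorem tsum_dirac_mul (V : Term) (g : Term → ℝ≥0∞) : ∑' W, dirac V W * g W = g V := by
  rw [tsum_eq_single V fun W hW => by rw [dirac_of_ne hW, zero_mul], dirac_self, one_mul]

theorem tsum_mul_dirac (D : PDist) (W : Term) : ∑' V, D V * dirac V W = D W := by
  rw [tsum_eq_single W fun V hV => by rw [dirac_of_ne hV.symm, mul_zero], dirac_self, mul_one]

theorem dsum_dirac (V : Term) : dsum (dirac V) = 1 := by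
  simpa [dsum] using tsum_dirac_mul V fun _ => 1

theorem dsum_mono {D E : PDist} (h : D ≤ E) : dsum D ≤ dsum E :=
  ENNReal.tsum_le_tsum h

/-- The equiprobable mixture of finitely many distributions, in the form it takes in `Conv.step`.
The mixture of the empty family is `∅`, since `0 / 0 = 0` in `ℝ≥0∞`. -/
noncomputable def mixture {n : ℕ} (D : Fin n → PDist) : PDist :=
  fun W => (∑ i, D i W) / (n : ℝ≥0∞)

theorem mixture_mono {n : ℕ} {D E : Fin n → PDist} (h : ∀ i, D i ≤ E i) :
    mixture D ≤ mixture E :=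
  fun W => ENNReal.div_le_div_right (Finset.sum_le_sum fun i _ => h i W) _

theorem mixture_apply {n : ℕ} (D : Fin n → PDist) (W : Term) :
    mixture D W = ∑' i, D i W * (n : ℝ≥0∞)⁻¹ := by
  rw [tsum_fintype, ← Finset.sum_mul, mixture, div_eq_mul_inv]

theorem tsum_mixture_mul {n : ℕ} (D : Fin n → PDist) (g : Term → ℝ≥0∞) :
    ∑' V, mixture D V * g V = ∑' i, (∑' V, D i V * g V) * (n : ℝ≥0∞)⁻¹ := by
  simp only [mixture_apply, ← ENNReal.tsum_mul_right]
  rw [ENNReal.tsum_comm]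
  simp only [mul_right_comm]

theorem dsum_mixture {n : ℕ} (D : Fin n → PDist) :
    dsum (mixture D) = ∑' i, dsum (D i) * (n : ℝ≥0∞)⁻¹ := by
  simpa [dsum] using tsum_mixture_mul D fun _ => 1

theorem mixture_singleton (D : Fin 1 → PDist) : mixture D = D 0 := by
  funext W
  simp [mixture]

theorem mixture_cast {m n : ℕ} (h : m = n) (D : Fin n → PDist) :
    mixture (fun i : Fin m => D (i.cast h)) = mixture D := by
  subst h
  rfl

theorem mixture_map {α β : Type*} (f : β → PDist) (C : α → β) (l : List α) :
    mixture (fun i => f ((l.map C).get i)) = mixture fun i => f (C (l.get i)) := by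
  rw [← mixture_cast (List.length_map C)]
  simp

theorem isDist_dzero : IsDist dzero := by
  simp [IsDist, dzero, dsum]

theorem isDist_dirac {V : Term} (hV : V.IsValue) : IsDist (dirac V) := by
  refine ⟨fun W hW => ?_, (dsum_dirac V).le⟩
  rwa [not_imp_comm.mp dirac_of_ne hW]

theorem isDist_mixture {n : ℕ} {D : Fin n → PDist} (hD : ∀ i, IsDist (D i)) :
    IsDist (mixture D) := by
  refine ⟨fun W hW => ?_, ?_⟩
  · obtain ⟨i, hi⟩ : ∃ i, D i W ≠ 0 := by
      contrapose! hW
      simp [mixture_apply, hW]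
    exact (hD i).1 W hi
  · calc dsum (mixture D) = ∑' i, dsum (D i) * (n : ℝ≥0∞)⁻¹ := dsum_mixture D
      _ ≤ ∑' _ : Fin n, 1 * (n : ℝ≥0∞)⁻¹ := by gcongr with i; exact (hD i).2
      _ ≤ 1 := by simp [ENNReal.mul_inv_le_one]

theorem IsDist.tsum_mul_le_tsum_mul {D : PDist} (hD : IsDist D) {g g' : Term → ℝ≥0∞}
    (h : ∀ V, V.IsValue → g V ≤ g' V) : ∑' V, D V * g V ≤ ∑' V, D V * g' V := by
  refine ENNReal.tsum_le_tsum fun V => ?_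
  by_cases hV : D V = 0
  · simp [hV]
  · exact mul_le_mul_right (h V (hD.1 V hV)) _

/-! ### Small-step semantics -/

/-- Evaluation contexts of a reduction relation: term transformers `C` such that reductions of `M`
lift to `C M`. -/
def IsEvalContext (Red : Term → List Term → Prop) (C : Term → Term) : Prop :=
  ∀ ⦃M Ns⦄, Red M Ns → Red (C M) (Ns.map C)

section SmallStep

variable {Red : Term → List Term → Prop} {M : Term} {C : Term → Term}

namespace Conv

theorem isDist {D : PDist} (h : Conv Red M D) : IsDist D := by
  induction h with
  | bot => exact isDist_dzero
  | val hV => exact isDist_dirac hV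
  | step Ds _ _ ih => exact isDist_mixture ih

theorem step_map {Ns : List Term} {D : Fin Ns.length → PDist} (h : Red M (Ns.map C))
    (hD : ∀ i, Conv Red (C (Ns.get i)) (D i)) : Conv Red M (mixture D) := by
  rw [← mixture_cast (List.length_map C)]
  exact Conv.step _ h fun i => by simpa using hD (i.cast (List.length_map C))

theorem bind {D : PDist} (hC : IsEvalContext Red C) (h : Conv Red M D) {G : Term → PDist}
    (hG : ∀ V, Conv Red (C V) (G V)) : Conv Red (C M) fun W => ∑' V, D V * G V W := by
  induction h with
  | bot M =>
    simp only [dzero, zero_mul, tsum_zero]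
    exact Conv.bot (C M)
  | @val V _ => simpa only [tsum_dirac_mul] using hG V
  | step Ds hM _ ih =>
    convert step_map (hC hM) ih using 1
    funext W
    rw [mixture_apply]
    exact tsum_mixture_mul Ds (G · W)

theorem directedOn (hdet : Relator.RightUnique Red) (hval : ∀ M Ns, Red M Ns → ¬ M.IsValue)
    (M : Term) : DirectedOn (· ≤ ·) {D | Conv Red M D} := by
  intro D hD
  induction hD with
  | bot M => exact fun E hE => ⟨E, hE, fun _ => zero_le, le_rfl⟩
  | @val V hV =>
    rintro E (_ | _ | ⟨_, hred, _⟩)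
    · exact ⟨dirac V, .val hV, le_rfl, fun _ => zero_le⟩
    · exact ⟨dirac V, .val hV, le_rfl, le_rfl⟩
    · exact absurd hV (hval _ _ hred)
  | @step M Ns Ds hred hDs ih =>
    rintro E (_ | hV | ⟨Es, hred', hEs⟩)
    · exact ⟨_, Conv.step Ds hred hDs, le_rfl, fun _ => zero_le⟩
    · exact absurd hV (hval _ _ hred)
    · obtain rfl := hdet hred hred'
      choose Fs hFs hD hE using fun i => ih i (Es i) (hEs i)
      exact ⟨_, Conv.step Fs hred hFs, mixture_mono hD, mixture_mono hE⟩

end Conv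

theorem le_semOf {S : Term → PDist → Prop} {D : PDist} (h : S M D) : D ≤ semOf S M :=
  fun _ => le_iSup₂_of_le D h le_rfl

theorem semOf_apply (S : Term → PDist → Prop) (M W : Term) :
    semOf S M W = ⨆ D : {D // S M D}, D.1 W :=
  iSup_subtype'

theorem tsum_semOf_mul {S : Term → PDist → Prop} (hS : DirectedOn (· ≤ ·) {D | S M D})
    (g : Term → ℝ≥0∞) :
    ∑' V, semOf S M V * g V = ⨆ D : {D // S M D}, ∑' V, D.1 V * g V := by
  simp only [semOf_apply, ENNReal.iSup_mul]
  refine tsum_iSup_of_directed fun D E => ?_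
  obtain ⟨K, hD, hE⟩ := hS.directed_val D E
  exact ⟨K, fun V => mul_le_mul_left (hD V) _, fun V => mul_le_mul_left (hE V) _⟩

theorem isDist_semOf {S : Term → PDist → Prop} (hS : DirectedOn (· ≤ ·) {D | S M D})
    (hdist : ∀ D, S M D → IsDist D) : IsDist (semOf S M) := by
  refine ⟨fun V hV => ?_, ?_⟩
  · obtain ⟨⟨D, hD⟩, hDV⟩ : ∃ D : {D // S M D}, D.1 V ≠ 0 := by
      contrapose! hV
      simp [semOf_apply, hV]
    exact (hdist D hD).1 V hDV
  · have hsum := tsum_semOf_mul hS fun _ => 1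
    simp only [mul_one] at hsum
    exact hsum.trans_le (iSup_le fun D => (hdist D D.2).2)

theorem tsum_semOf_mul_semOf_le (hM : DirectedOn (· ≤ ·) {D | Conv Red M D})
    (hC : IsEvalContext Red C) (W : Term) :
    ∑' V, semOf (Conv Red) M V * semOf (Conv Red) (C V) W ≤ semOf (Conv Red) (C M) W := by
  rw [tsum_semOf_mul hM]
  refine iSup_le fun D => ?_
  have (V : Term) : Nonempty {E // Conv Red (C V) E} := ⟨⟨dzero, .bot _⟩⟩
  simp only [semOf_apply _ (C _), ENNReal.mul_iSup]
  rw [tsum_iSup_eq_iSup_pi]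
  exact iSup_le fun G => le_iSup_of_le ⟨_, D.2.bind hC fun V => (G V).2⟩ le_rfl

end SmallStep

/-! ### Call-by-value reduction -/

namespace RedV

theorem not_isValue {M : Term} {Ns : List Term} (h : RedV M Ns) : ¬ M.IsValue := by
  rintro (_ | _) <;> cases h

theorem rightUnique : Relator.RightUnique RedV := by
  intro M Ns Ks hN hK
  induction hN generalizing Ks with
  | beta hV =>
    cases hK with
    | beta => rfl
    | appL h => exact absurd (.lam _) h.not_isValue
    | appR _ h => exact absurd hV h.not_isValue
  | choice hV hW =>
    cases hK with
    | choice => rfl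
    | choiceL h => exact absurd hV h.not_isValue
    | choiceR _ h => exact absurd hW h.not_isValue
  | appL h ih =>
    cases hK with
    | beta => exact absurd (.lam _) h.not_isValue
    | appL h' => rw [ih h']
    | appR hV => exact absurd hV h.not_isValue
  | appR hV h ih =>
    cases hK with
    | beta hW => exact absurd hW h.not_isValue
    | appL h' => exact absurd hV h'.not_isValue
    | appR _ h' => rw [ih h']
  | choiceL h ih =>
    cases hK with
    | choice hV => exact absurd hV h.not_isValue
    | choiceL h' => rw [ih h']
    | choiceR hV => exact absurd hV h.not_isValue
  | choiceR hV h ih =>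
    cases hK with
    | choice _ hW => exact absurd hW h.not_isValue
    | choiceL h' => exact absurd hV h'.not_isValue
    | choiceR _ h' => rw [ih h']

end RedV

theorem SmallV.directedOn (M : Term) : DirectedOn (· ≤ ·) {D | SmallV M D} :=
  Conv.directedOn RedV.rightUnique (fun _ _ => RedV.not_isValue) M

theorem isDist_semV (M : Term) : IsDist (semV M) :=
  isDist_semOf (SmallV.directedOn M) fun _ => Conv.isDist

theorem dirac_le_semV {V : Term} (hV : V.IsValue) : dirac V ≤ semV V :=
  le_semOf (Conv.val hV)

theorem tsum_semV_mul_semV_le {C : Term → Term} (hC : IsEvalContext RedV C) (M W : Term) :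
    ∑' V, semV M V * semV (C V) W ≤ semV (C M) W :=
  tsum_semOf_mul_semOf_le (SmallV.directedOn M) hC W

theorem semV_subst_le (M : Term) {V : Term} (hV : V.IsValue) :
    semV (M.subst 0 V) ≤ semV (.app (.lam M) V) := by
  refine fun W => iSup₂_le fun D hD => ?_
  have h : SmallV (.app (.lam M) V) (mixture fun _ : Fin 1 => D) :=
    Conv.step (Ns := [M.subst 0 V]) (fun _ => D) (RedV.beta hV) fun i => by
      fin_cases i; exact hD
  rw [mixture_singleton] at h
  exact le_semOf h W

theorem mixture_dirac_le_semV {V W : Term} (hV : V.IsValue) (hW : W.IsValue) :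
    mixture ![dirac V, dirac W] ≤ semV (.choice V W) :=
  le_semOf <| Conv.step (Ns := [V, W]) ![dirac V, dirac W] (RedV.choice hV hW) fun i => by
    fin_cases i
    exacts [.val hV, .val hW]

/-! ### Big-step semantics -/

/-- The conclusion of the big-step rule for applications, from the distributions `E` of the
function, `F` of the argument, and `G P V` of the body `P` with `V` substituted. -/
noncomputable def appDist (E F : PDist) (G : Term → Term → PDist) : PDist :=
  fun W => ∑' (P : Term), ∑' (V : Term), E (.lam P) * F V * G P V W

/-- The conclusion of the big-step rule for sums, from the distributions of the two summands. -/
noncomputable def choiceDist (E F : PDist) : PDist :=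
  fun W => (E W * dsum F + F W * dsum E) / 2

theorem appDist_mono {E E' F F' : PDist} {G G' : Term → Term → PDist} (hE : E ≤ E') (hF : F ≤ F')
    (hG : ∀ P V, E' (.lam P) ≠ 0 → F' V ≠ 0 → G P V ≤ G' P V) :
    appDist E F G ≤ appDist E' F' G' := by
  refine fun W => ENNReal.tsum_le_tsum fun P => ENNReal.tsum_le_tsum fun V => ?_
  have hEF : E (.lam P) * F V ≤ E' (.lam P) * F' V := mul_le_mul' (hE _) (hF _)
  by_cases h0 : E' (.lam P) * F' V = 0
  · simp [le_zero_iff.mp (hEF.trans_eq h0)]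
  · exact mul_le_mul' hEF (hG P V (left_ne_zero_of_mul h0) (right_ne_zero_of_mul h0) W)

theorem appDist_dirac (M V : Term) (G : Term → Term → PDist) :
    appDist (dirac (.lam M)) (dirac V) G = G M V := by
  funext W
  simp only [appDist, mul_assoc, ENNReal.tsum_mul_left, tsum_dirac_mul]
  rw [tsum_eq_single M fun P hP => by rw [dirac_of_ne (by simpa using hP), zero_mul],
    dirac_self, one_mul]

theorem appDist_mixture_left {n : ℕ} (E : Fin n → PDist) (F : PDist) (G : Term → Term → PDist) :
    appDist (mixture E) F G = mixture fun i => appDist (E i) F G := by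
  funext W
  simp only [appDist, mixture_apply, ← ENNReal.tsum_mul_right,
    ENNReal.tsum_comm (α := Term) (β := Fin n)]
  exact tsum_congr fun i => tsum_congr fun P => tsum_congr fun V => by ring

theorem appDist_mixture_right {n : ℕ} (E : PDist) (F : Fin n → PDist)
    (G : Term → Term → PDist) :
    appDist E (mixture F) G = mixture fun i => appDist E (F i) G := by
  funext W
  simp only [appDist, mixture_apply, ← ENNReal.tsum_mul_right, ← ENNReal.tsum_mul_left,
    ENNReal.tsum_comm (α := Term) (β := Fin n)]
  exact tsum_congr fun i => tsum_congr fun P => tsum_congr fun V => by ring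

theorem appDist_le_tsum (E F : PDist) (G : Term → Term → PDist) {K : Term → ℝ≥0∞} {W : Term}
    (hK : ∀ P, ∑' V, F V * G P V W ≤ K (.lam P)) :
    appDist E F G W ≤ ∑' N, E N * K N := by
  calc appDist E F G W = ∑' P, E (.lam P) * ∑' V, F V * G P V W := by
        simp only [appDist, mul_assoc, ENNReal.tsum_mul_left]
    _ ≤ ∑' P, E (.lam P) * K (.lam P) := by gcongr with P; exact hK P
    _ ≤ ∑' N, E N * K N :=
      ENNReal.tsum_comp_le_tsum_of_injective (fun _ _ => Term.lam.inj) fun N => E N * K N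

theorem choiceDist_mono {E E' F F' : PDist} (hE : E ≤ E') (hF : F ≤ F') :
    choiceDist E F ≤ choiceDist E' F' := fun W =>
  ENNReal.div_le_div_right (add_le_add (mul_le_mul' (hE W) (dsum_mono hF))
    (mul_le_mul' (hF W) (dsum_mono hE))) _

theorem choiceDist_comm (E F : PDist) : choiceDist E F = choiceDist F E := by
  funext W
  rw [choiceDist, choiceDist, add_comm]

theorem choiceDist_dirac (V W : Term) :
    choiceDist (dirac V) (dirac W) = mixture ![dirac V, dirac W] := by
  funext U
  simp [choiceDist, mixture, dsum_dirac]

theorem choiceDist_mixture_left {n : ℕ} (E : Fin n → PDist) (F : PDist) :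
    choiceDist (mixture E) F = mixture fun i => choiceDist (E i) F := by
  funext W
  simp only [choiceDist, dsum_mixture, mixture_apply, div_eq_mul_inv, ← ENNReal.tsum_mul_left,
    ← ENNReal.tsum_mul_right, ← ENNReal.tsum_add]
  exact tsum_congr fun i => by ring

theorem choiceDist_mixture_right {n : ℕ} (E : PDist) (F : Fin n → PDist) :
    choiceDist E (mixture F) = mixture fun i => choiceDist E (F i) := by
  simp only [choiceDist_comm E, choiceDist_mixture_left]

theorem choiceDist_eq_tsum_left (E F : PDist) (W : Term) :
    choiceDist E F W = ∑' V, E V * choiceDist (dirac V) F W := by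
  simp only [choiceDist, dsum_dirac, div_eq_mul_inv, mul_one, ← mul_assoc, mul_add,
    ENNReal.tsum_mul_right, ENNReal.tsum_add, tsum_mul_dirac]
  rw [mul_comm (F W), dsum, dsum]

theorem choiceDist_eq_tsum_right (E F : PDist) (W : Term) :
    choiceDist E F W = ∑' V, F V * choiceDist E (dirac V) W := by
  simp only [choiceDist_comm E, choiceDist_eq_tsum_left F]

/-- The monotone operator underlying the call-by-value big-step rules: the rules with the
distributions of the premises read off from a family `f`. -/
noncomputable def bigStepV : (Term → PDist) →o (Term → PDist) where
  toFun f
    | .app N L => appDist (f N) (f L) fun P V => f (P.subst 0 V)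
    | .choice N L => choiceDist (f N) (f L)
    | .var n => dirac (.var n)
    | .lam M => dirac (.lam M)
  monotone' _ _ h
    | .app N L => appDist_mono (h N) (h L) fun P V _ _ => h (P.subst 0 V)
    | .choice N L => choiceDist_mono (h N) (h L)
    | .var _ => le_rfl
    | .lam _ => le_rfl

theorem bigStepV_of_isValue (f : Term → PDist) {V : Term} (hV : V.IsValue) :
    bigStepV f V = dirac V := by
  cases hV <;> rfl

theorem bigStepV_app (f : Term → PDist) (N L : Term) :
    bigStepV f (.app N L) = appDist (f N) (f L) fun P V => f (P.subst 0 V) :=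
  rfl

theorem bigStepV_choice (f : Term → PDist) (N L : Term) :
    bigStepV f (.choice N L) = choiceDist (f N) (f L) :=
  rfl

theorem bigVStep_bigStepV (f : Term → PDist) (M : Term) :
    BigVStep (fun N E => E = f N) M (bigStepV f M) := by
  cases M with
  | var n => exact .inl ⟨.var n, rfl⟩
  | lam M => exact .inl ⟨.lam M, rfl⟩
  | app N L => exact .inr (.inl ⟨N, L, f N, f L, _, rfl, rfl, rfl, fun _ _ _ _ _ => rfl, rfl⟩)
  | choice N L => exact .inr (.inr ⟨N, L, f N, f L, rfl, rfl, rfl, rfl⟩)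

theorem BigVStep.bigStepV_le {R : Term → PDist → Prop} {f : Term → PDist}
    (hR : ∀ N E, R N E → IsDist E ∧ f N ≤ E) {M : Term} {D : PDist} (h : BigVStep R M D) :
    bigStepV f M ≤ D := by
  rcases h with ⟨hM, rfl⟩ | ⟨N, L, E, F, G, rfl, hE, hF, hG, rfl⟩ | ⟨N, L, E, F, rfl, hE, hF, rfl⟩
  · exact (bigStepV_of_isValue f hM).le
  · exact appDist_mono (hR N E hE).2 (hR L F hF).2 fun P V hP hV =>
      (hR _ _ (hG P V hP ((hR L F hF).1.1 V hV) hV)).2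
  · exact choiceDist_mono (hR N E hE).2 (hR L F hF).2

theorem bigV_of_isFixedPt {f : Term → PDist} (hf : Function.IsFixedPt bigStepV f)
    (hdist : ∀ M, IsDist (f M)) (M : Term) : BigV M (f M) := by
  refine ⟨fun N E => E = f N, ?_, rfl⟩
  rintro N _ rfl
  refine ⟨hdist N, ?_⟩
  have h := bigVStep_bigStepV f N
  rwa [hf.eq] at h

theorem bigStepV_bigSemOf_le : bigStepV (bigSemOf BigV) ≤ bigSemOf BigV := by
  refine fun M W => le_iInf₂ fun D ⟨R, hR, hMD⟩ => ?_
  refine (hR M D hMD).2.bigStepV_le (fun N E hNE => ⟨(hR N E hNE).1, fun U => ?_⟩) W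
  exact iInf₂_le_of_le E ⟨R, hR, hNE⟩ le_rfl

/-! ### Comparison -/

theorem RedV.mixture_eq_of_isFixedPt {f : Term → PDist} (hf : Function.IsFixedPt bigStepV f)
    {M : Term} {Ns : List Term} (h : RedV M Ns) : mixture (fun i => f (Ns.get i)) = f M := by
  have value {V : Term} (hV : V.IsValue) : f V = dirac V := by
    rw [← hf.eq, bigStepV_of_isValue f hV]
  have app (N L : Term) : f (.app N L) = appDist (f N) (f L) fun P V => f (P.subst 0 V) := by
    conv_lhs => rw [← hf.eq, bigStepV_app]
  have choice (N L : Term) : f (.choice N L) = choiceDist (f N) (f L) := by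
    conv_lhs => rw [← hf.eq, bigStepV_choice]
  induction h with
  | beta hV =>
    rw [app, value (.lam _), value hV, appDist_dirac]
    exact mixture_singleton _
  | choice hV hW =>
    rw [choice, value hV, value hW, choiceDist_dirac, ← value hV, ← value hW]
    congr 1
    funext i
    fin_cases i <;> rfl
  | appL _ ih => simp only [app, mixture_map f, ← ih, appDist_mixture_left]
  | appR _ _ ih => simp only [app, mixture_map f, ← ih, appDist_mixture_right]
  | choiceL _ ih => simp only [choice, mixture_map f, ← ih, choiceDist_mixture_left]
  | choiceR _ _ ih => simp only [choice, mixture_map f, ← ih, choiceDist_mixture_right]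

theorem semV_le_of_isFixedPt {f : Term → PDist} (hf : Function.IsFixedPt bigStepV f) :
    semV ≤ f := by
  refine fun M W => iSup₂_le fun D hD => ?_
  suffices D ≤ f M from this W
  induction hD with
  | bot => exact fun _ => zero_le
  | val hV => rw [← hf.eq, bigStepV_of_isValue f hV]
  | step Ds hM _ ih => exact (mixture_mono ih).trans_eq (hM.mixture_eq_of_isFixedPt hf)

theorem appDist_semV_le (N L : Term) :
    appDist (semV N) (semV L) (fun P V => semV (P.subst 0 V)) ≤ semV (.app N L) := fun W =>
  calc appDist (semV N) (semV L) (fun P V => semV (P.subst 0 V)) W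
    _ ≤ ∑' K, semV N K * semV (.app K L) W := by
      refine appDist_le_tsum _ _ _ fun P => ?_
      calc ∑' V, semV L V * semV (P.subst 0 V) W
        _ ≤ ∑' V, semV L V * semV (.app (.lam P) V) W :=
          (isDist_semV L).tsum_mul_le_tsum_mul fun V hV => semV_subst_le P hV W
        _ ≤ semV (.app (.lam P) L) W :=
          tsum_semV_mul_semV_le (fun _ _ h => .appR (.lam P) h) L W
    _ ≤ semV (.app N L) W := tsum_semV_mul_semV_le (fun _ _ h => .appL h) N W

theorem choiceDist_semV_le (N L : Term) :
    choiceDist (semV N) (semV L) ≤ semV (.choice N L) := fun W =>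
  calc choiceDist (semV N) (semV L) W
    _ = ∑' V, semV N V * choiceDist (dirac V) (semV L) W := choiceDist_eq_tsum_left _ _ W
    _ ≤ ∑' V, semV N V * semV (.choice V L) W := by
      refine (isDist_semV N).tsum_mul_le_tsum_mul fun V hV => ?_
      calc choiceDist (dirac V) (semV L) W
        _ = ∑' U, semV L U * choiceDist (dirac V) (dirac U) W := choiceDist_eq_tsum_right _ _ W
        _ ≤ ∑' U, semV L U * semV (.choice V U) W :=
          (isDist_semV L).tsum_mul_le_tsum_mul fun U hU => by
            rw [choiceDist_dirac]; exact mixture_dirac_le_semV hV hU W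
        _ ≤ semV (.choice V L) W := tsum_semV_mul_semV_le (fun _ _ h => .choiceR hV h) L W
    _ ≤ semV (.choice N L) W := tsum_semV_mul_semV_le (fun _ _ h => .choiceL h) N W

theorem bigStepV_semV_le : bigStepV semV ≤ semV
  | .var n => dirac_le_semV (.var n)
  | .lam M => dirac_le_semV (.lam M)
  | .app N L => appDist_semV_le N L
  | .choice N L => choiceDist_semV_le N L

theorem semV_eq_lfp_bigStepV : semV = bigStepV.lfp :=
  le_antisymm (semV_le_of_isFixedPt bigStepV.isFixedPt_lfp) (bigStepV.lfp_le bigStepV_semV_le)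

theorem bigV_semV (M : Term) : BigV M (semV M) :=
  bigV_of_isFixedPt (semV_eq_lfp_bigStepV ▸ bigStepV.isFixedPt_lfp) isDist_semV M

theorem semV_le_bigSemOf : semV ≤ bigSemOf BigV :=
  semV_eq_lfp_bigStepV.trans_le (bigStepV.lfp_le bigStepV_bigSemOf_le)

theorem bigSemV_eq_semV_general (M : Term) : bigSemOf BigV M = semV M :=
  le_antisymm (fun _ => iInf₂_le_of_le (semV M) (bigV_semV M) le_rfl) (semV_le_bigSemOf M)

/-- the call-by-value big-step and small-step semantics
coincide. -/
theorem bigSemV_eq_semV (M : Term) (hM : M.Closed) :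
    bigSemOf BigV M = semV M :=
  bigSemV_eq_semV_general M
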